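/- Monotonicity in the dimension: for all d ≥ 1, all α ∈ [0,1) and all k = 0,…,d, one has p_L(α,d,k) ≤ p_L(α,d+1,k). -/

import Mathlib

open MeasureTheory Filter ENNReal

/-- Sites of `ℤ^{d+1}`. -/
abbrev Site (d : ℕ) := Fin (d + 1) → ℤ

/-- Site-percolation configurations on `ℤ^{d+1}`: a site is open iff its value is `true`. -/
abbrev Config (d : ℕ) := Site d → Bool

/-- `P` is the i.i.d. Bernoulli(`p`) product measure on `{0,1}^ι`: it is a probability
measure whose cylinder events have the correct product probabilities. -/
def IsBernoulli {ι : Type*} (p : ℝ) (P : Measure (ι → Bool)) : Prop :=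
  IsProbabilityMeasure P ∧
    ∀ (s : Finset ι) (f : ι → Bool),
      P {ω | ∀ x ∈ s, ω x = f x} =
        ∏ x ∈ s, (if f x then ENNReal.ofReal p else ENNReal.ofReal (1 - p))

/-- A function `F : ℤ^d → ℤ` is Lipschitz: `‖x − y‖₁ = 1 → |F x − F y| ≤ 1`. -/
def IsLipschitzFn {d : ℕ} (F : (Fin d → ℤ) → ℤ) : Prop :=
  ∀ x y : Fin d → ℤ, (∑ i, |x i - y i|) = 1 → |F x - F y| ≤ 1

/-- Height `⌊α ∑ᵢ ηᵢ xᵢ⌋` of the tilted plane `L^{α,d}_η` above `x ∈ ℤ^d`. -/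
noncomputable def planeHt (α : ℝ) {d : ℕ} (η x : Fin d → ℤ) : ℤ :=
  ⌊α * ∑ i, (η i : ℝ) * (x i : ℝ)⌋

/-- `η ∈ {-1,0,1}^d`. -/
def IsSign {d : ℕ} (η : Fin d → ℤ) : Prop := ∀ i, η i = -1 ∨ η i = 0 ∨ η i = 1

/-- The event `LIP^{α,d}_η` that there is an open Lipschitz surface lying (strictly) above
the tilted plane `L^{α,d}_η`. -/
def LIP (α : ℝ) {d : ℕ} (η : Fin d → ℤ) : Set (Config d) :=
  {ω | ∃ F : (Fin d → ℤ) → ℤ, IsLipschitzFn F ∧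
    ∀ x : Fin d → ℤ, ω (Fin.snoc x (F x)) = true ∧ planeHt α η x < F x}

/-- `pc` is the critical probability `p_L(α,d,η)` of Lipschitz percolation above the tilted
plane `L^{α,d}_η`: `pc ∈ (0,1)`, for `p` below it there is `P_p`-a.s. no open Lipschitz
surface above the plane, and for `p` above it there `P_p`-a.s. is one.
(Here `P p` is the Bernoulli(`p`) product measure on `{0,1}^{ℤ^{d+1}}`.) -/
def IsCriticalProb {d : ℕ} (P : ℝ → Measure (Config d)) (α : ℝ) (η : Fin d → ℤ)
    (pc : ℝ) : Prop :=
  pc ∈ Set.Ioo (0 : ℝ) 1 ∧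
    (∀ p, 0 ≤ p → p < pc → P p (LIP α η) = 0) ∧
    (∀ p, pc < p → p ≤ 1 → P p (LIP α η) = 1)

/-- The canonical direction vector `η ∈ {-1,0,1}^d` with `k` entries equal to `1`; the
critical probability `p_L(α,d,η)` depends on `η` only through `k = ‖η‖₁`, and
`p_L(α,d,k)` denotes the common value. -/
def etaK (d k : ℕ) : Fin d → ℤ := fun i => if (i : ℕ) < k then 1 else 0

/-- The event that `ω` agrees with `f` on a finite set is measurable. -/
theorem measurableSet_cylinder_eq {ι : Type*} (s : Finset ι) (f : ι → Bool) :
    MeasurableSet {ω : ι → Bool | ∀ x ∈ s, ω x = f x} := by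
  have h : {ω : ι → Bool | ∀ x ∈ s, ω x = f x} = ⋂ x ∈ s, (fun ω : ι → Bool => ω x) ⁻¹' {f x} := by
    ext ω
    simp
  rw [h]
  exact s.measurableSet_biInter fun x _ => measurable_pi_apply x (measurableSet_singleton _)

/-- The Bernoulli product measure is determined by its cylinder probabilities. -/
theorem IsBernoulli.unique {ι : Type*} {p : ℝ} {P Q : Measure (ι → Bool)}
    (hP : IsBernoulli p P) (hQ : IsBernoulli p Q) : P = Q := by
  have := hP.1
  have := hQ.1
  refine IsProjectiveLimit.unique (P := fun I : Finset ι => Q.map I.restrict) (fun I => ?_)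
    (fun _ => rfl)
  refine Measure.ext_of_singleton fun g => ?_
  obtain ⟨f, rfl⟩ : ∃ f : ι → Bool, I.restrict f = g := by
    classical
    refine ⟨fun x => if h : x ∈ I then g ⟨x, h⟩ else false, ?_⟩
    ext x
    simp
  have hpre : I.restrict (π := fun _ => Bool) ⁻¹' {I.restrict f} =
      {ω : ι → Bool | ∀ x ∈ I, ω x = f x} := by
    ext ω
    simp [funext_iff]
  rw [Measure.map_apply (Finset.measurable_restrict I) (measurableSet_singleton _),
    Measure.map_apply (Finset.measurable_restrict I) (measurableSet_singleton _), hpre,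
    hP.2, hQ.2]

theorem measurable_comp_right {ι κ : Type*} (e : κ → ι) :
    Measurable fun (ω : ι → Bool) => ω ∘ e :=
  measurable_pi_lambda _ fun x => measurable_pi_apply (e x)

/-- Restricting a Bernoulli configuration along an injection gives a Bernoulli configuration. -/
theorem IsBernoulli.map_comp {ι κ : Type*} {p : ℝ} {P : Measure (ι → Bool)}
    (hP : IsBernoulli p P) {e : κ → ι} (he : Function.Injective e) :
    IsBernoulli p (P.map fun ω => ω ∘ e) := by
  have := hP.1
  refine ⟨Measure.isProbabilityMeasure_map (measurable_comp_right e).aemeasurable, fun s f => ?_⟩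
  have hpre : (fun ω : ι → Bool => ω ∘ e) ⁻¹' {ω | ∀ x ∈ s, ω x = f x} =
      {ω | ∀ y ∈ s.map ⟨e, he⟩, ω y = Function.extend e f (fun _ => false) y} := by
    ext ω
    simp [he.extend_apply]
  rw [Measure.map_apply (measurable_comp_right e) (measurableSet_cylinder_eq s f), hpre, hP.2,
    Finset.prod_map]
  simp [he.extend_apply]

/-- Embedding of `ℤ^{d+1}` into `ℤ^{d+2}` as the hyperplane where the last horizontal coordinate
vanishes. -/
def hyperplaneEmb (d : ℕ) (s : Site d) : Site (d + 1) :=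
  Fin.snoc (α := fun _ => ℤ) (Fin.snoc (α := fun _ => ℤ) (Fin.init s) 0) (s (Fin.last d))

theorem hyperplaneEmb_injective (d : ℕ) : Function.Injective (hyperplaneEmb d) := by
  intro s t h
  obtain ⟨h₁, h₂⟩ := Fin.snoc_inj.mp h
  rw [← Fin.snoc_init_self s, ← Fin.snoc_init_self t, (Fin.snoc_inj.mp h₁).1, h₂]

theorem hyperplaneEmb_snoc {d : ℕ} (x : Fin d → ℤ) (h : ℤ) :
    hyperplaneEmb d (Fin.snoc x h) =
      Fin.snoc (α := fun _ => ℤ) (Fin.snoc (α := fun _ => ℤ) x 0) h := by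
  simp [hyperplaneEmb]

theorem planeHt_etaK_snoc_zero (α : ℝ) {d : ℕ} (k : ℕ) (x : Fin d → ℤ) :
    planeHt α (etaK (d + 1) k) (Fin.snoc x 0) = planeHt α (etaK d k) x := by
  simp [planeHt, etaK, Fin.sum_univ_castSucc]

/-- An open Lipschitz surface in dimension `d + 1` restricts to one in dimension `d`. -/
theorem comp_hyperplaneEmb_mem_LIP {α : ℝ} {d k : ℕ} {ω : Config (d + 1)}
    (hω : ω ∈ LIP α (etaK (d + 1) k)) : ω ∘ hyperplaneEmb d ∈ LIP α (etaK d k) := by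
  obtain ⟨F, hF, hopen⟩ := hω
  refine ⟨fun x => F (Fin.snoc x 0), fun x y hxy => hF _ _ ?_, fun x => ⟨?_, ?_⟩⟩
  · simpa [Fin.sum_univ_castSucc] using hxy
  · rw [Function.comp_apply, hyperplaneEmb_snoc]
    exact (hopen _).1
  · rw [← planeHt_etaK_snoc_zero]
    exact (hopen _).2

/-- Monotonicity in the dimension: `p_L(α,d,k) ≤ p_L(α,d+1,k)`. -/
theorem critical_prob_mono_in_dimension
    {d : ℕ} (hd : 1 ≤ d) (α : ℝ) (hα : α ∈ Set.Ico (0 : ℝ) 1) (k : ℕ) (hk : k ≤ d)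
    (P : (n : ℕ) → ℝ → Measure (Config n))
    (hP : ∀ n : ℕ, ∀ p ∈ Set.Icc (0 : ℝ) 1, IsBernoulli p (P n p))
    (pc pc' : ℝ) (hpc : IsCriticalProb (P d) α (etaK d k) pc)
    (hpc' : IsCriticalProb (P (d + 1)) α (etaK (d + 1) k) pc') :
    pc ≤ pc' := by
  by_contra! hlt
  obtain ⟨p, hp', hp⟩ := exists_between hlt
  have hp0 : 0 ≤ p := (hpc'.1.1.trans hp').le
  have hp1 : p ≤ 1 := (hp.trans hpc.1.2).le
  have hmap : (P (d + 1) p).map (fun ω => ω ∘ hyperplaneEmb d) = P d p :=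
    ((hP (d + 1) p ⟨hp0, hp1⟩).map_comp (hyperplaneEmb_injective d)).unique (hP d p ⟨hp0, hp1⟩)
  have hnull : P (d + 1) p (LIP α (etaK (d + 1) k)) = 0 := by
    have hsub : LIP α (etaK (d + 1) k) ⊆
        (fun ω : Config (d + 1) => ω ∘ hyperplaneEmb d) ⁻¹' LIP α (etaK d k) :=
      fun ω hω => comp_hyperplaneEmb_mem_LIP hω
    refine measure_mono_null hsub (Measure.preimage_null_of_map_null
      (measurable_comp_right (hyperplaneEmb d)).aemeasurable ?_)
    rw [hmap]
    exact hpc.2.1 p hp0 hp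
  exact zero_ne_one (hnull.symm.trans (hpc'.2.2 p hp' hp1))
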